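/- (Algebraic core of Theorem 7 on Σ^{i,1}(r).) Let i ≥ 1, h ≥ 1 and d = ih − i + 1. In ℤ[x_1,…,x_i,y_1,…,y_h], the homogeneous component of degree d of the polynomial ∏_{k=1}^{i} ∏_{l=1}^{h} (1 + y_l − x_k) · ∑_{r=0}^{d} (−1)^r h_r(x_1,…,x_i) equals ∑_{(λ,μ)∈J} (−1)^{|μ|} · ( ∑_{x} E_{∁λ~/(μ−x)~}(i) ) · s_{μ~}(x_1,…,x_i) · s_λ(y_1,…,y_h), where J = { (λ,μ) : λ a partition with λ_1 ≤ i and l(λ) ≤ h, μ a partition with μ_1 ≤ i, and |λ| + |μ| = d }, the inner sum is over all 0–1 vectors x of length l(μ) such that μ − x is a partition, and ∁λ~ denotes the complement of λ~ in the block (h^i), i.e. (∁λ~)_m = h − (λ~)_{i+1−m} for 1 ≤ m ≤ i. -/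

import Mathlib

/-!
STATEMENT 10 (algebraic core of Theorem 7 on `Σ^{i,1}(r)`):
with `d = ih − i + 1`, the degree-`d` homogeneous component of
`∏_{k,l} (1 + y_l − x_k) · ∑_{r=0}^{d} (−1)^r h_r(x)` in `ℤ[x_1,…,x_i,y_1,…,y_h]`
equals
`∑_{(λ,μ)∈J} (−1)^{|μ|} · ( ∑_x E_{∁λ~/(μ−x)~}(i) ) · s_{μ~}(x) · s_λ(y)`,
where `J = {(λ,μ) : λ_1 ≤ i, l(λ) ≤ h, μ_1 ≤ i, |λ|+|μ| = d}`, the inner sum is over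
0–1 vectors `x` such that `μ − x` is a partition, and `∁λ~` is the complement of `λ~`
in the block `(h^i)`.  Partitions are encoded 0-based; `μ` is parametrized by its first
`d` parts (any `μ` occurring has `l(μ) ≤ |μ| ≤ d`); the Schur polynomials are
characterized by the bialternant formula.
-/

open Finset MvPolynomial

/-- `E_{λ/μ}(n) = det[ C(λ_k + n − k, μ_l + n − l) ]_{1≤k,l≤n}` (indices written 0-based). -/
def Edet (n : ℕ) (lam mu : ℕ → ℕ) : ℤ :=
  (Matrix.of fun k l : Fin n =>
    ((lam k + (n - 1 - (k : ℕ))).choose (mu l + (n - 1 - (l : ℕ))) : ℤ)).det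

/-- The conjugate partition, 0-based: `conjP lam m = (λ~)_{m+1} = #{k : λ_k ≥ m+1}`. -/
noncomputable def conjP (lam : ℕ → ℕ) (m : ℕ) : ℕ := Nat.card {k : ℕ // m + 1 ≤ lam k}

/-- Extension of a bounded tuple to a function `ℕ → ℕ` (zero beyond the box). -/
def extF {n : ℕ} {m : Fin n → ℕ} (f : (k : Fin n) → Fin (m k + 1)) : ℕ → ℕ :=
  fun k => if h : k < n then (f ⟨k, h⟩ : ℕ) else 0

/-- The complete homogeneous symmetric polynomial `h_a(x_1,…,x_i)` in the x-variables. -/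
noncomputable def hsymX (i h a : ℕ) : MvPolynomial (Fin i ⊕ Fin h) ℤ :=
  ∑ f ∈ Finset.Nat.antidiagonalTuple i a, ∏ k, X (Sum.inl k) ^ f k

/-- The complement `∁λ~` of `λ~` in the block `(h^i)`:
`(∁λ~)_m = h − (λ~)_{i+1−m}` for `1 ≤ m ≤ i` (written 0-based). -/
noncomputable def complConj (i h : ℕ) (lam : ℕ → ℕ) : ℕ → ℕ :=
  fun m => if m < i then h - conjP lam (i - 1 - m) else 0

theorem alt_expand {R M P : Type*} [CommRing R] [AddCommGroup M] [Module R M]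
    [AddCommGroup P] [Module R P] {n N : ℕ} (f : M [⋀^Fin n]→ₗ[R] P)
    (A : Matrix (Fin n) (Fin N) R) (e : Fin N → M) :
    f (fun l => ∑ j, A l j • e j) =
      ∑ α : Fin n → Fin N with StrictAnti α, (A.submatrix id α).det • f (e ∘ α) := by
  classical
  have h1 : f (fun l => ∑ j, A l j • e j) =
      ∑ g : Fin n → Fin N, (∏ l, A l (g l)) • f (e ∘ g) := by
    rw [← AlternatingMap.coe_multilinearMap, MultilinearMap.map_sum]
    refine Finset.sum_congr rfl fun g _ => ?_
    rw [MultilinearMap.map_smul_univ]; rfl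
  have h2 : ∑ g : Fin n → Fin N, (∏ l, A l (g l)) • f (e ∘ g) =
      ∑ g : Fin n → Fin N with Function.Injective g, (∏ l, A l (g l)) • f (e ∘ g) := by
    rw [Finset.sum_filter]
    refine Finset.sum_congr rfl fun g _ => ?_
    split_ifs with hg
    · rfl
    · rw [AlternatingMap.map_eq_zero_of_not_injective, smul_zero]
      intro h; exact hg (Function.Injective.of_comp h)
  rw [h1, h2]
  have h3 : ∀ α : Fin n → Fin N, (A.submatrix id α).det • f (e ∘ α) =
      ∑ σ : Equiv.Perm (Fin n), (∏ l, A l ((α ∘ σ) l)) • f (e ∘ (α ∘ σ)) := by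
    intro α
    rw [← Matrix.det_transpose, Matrix.det_apply, Finset.sum_smul]
    refine Finset.sum_congr rfl fun σ _ => ?_
    rw [← Function.comp_assoc, AlternatingMap.map_perm]
    simp only [Matrix.transpose_apply, Matrix.submatrix_apply, id, Function.comp]
    rw [smul_comm, smul_assoc]
  simp_rw [h3]
  rw [← Finset.sum_product']
  symm
  refine Finset.sum_nbij (fun p => p.1 ∘ p.2) ?_ ?_ ?_ ?_
  · rintro ⟨α, σ⟩ h
    simp at h ⊢
    exact h.injective
  · rintro ⟨α, σ⟩ h ⟨α', σ'⟩ h' heq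
    simp at h h' heq
    have hr : Set.range (α ∘ Fin.rev) = Set.range (α' ∘ Fin.rev) := by
      rw [Fin.rev_surjective.range_comp, Fin.rev_surjective.range_comp,
        ← σ.surjective.range_comp α, heq, σ'.surjective.range_comp]
    have hm := (StrictMono.range_inj (h.comp Fin.rev_strictAnti) (h'.comp Fin.rev_strictAnti)).1 hr
    have : α = α' := by
      funext l
      simpa using congrFun hm l.rev
    subst this
    congr
    ext1 l
    exact h.injective (congrFun heq l)
  · intro g hg
    simp at hg
    refine ⟨⟨g ∘ (Tuple.sort g) ∘ Fin.rev, (Tuple.sort g * Fin.revPerm)⁻¹⟩, ?_, ?_⟩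
    · simp
      have : StrictMono (g ∘ Tuple.sort g) :=
        (Tuple.monotone_sort g).strictMono_of_injective (hg.comp (Tuple.sort g).injective)
      exact this.comp_strictAnti Fin.rev_strictAnti
    · funext l
      simp
  · intros; rfl

theorem prod_Ioi_split {M : Type*} [CommMonoid M] (h i : ℕ) (F : Fin (h + i) → Fin (h + i) → M) :
    ∏ a, ∏ b ∈ Finset.Ioi a, F a b =
      (∏ a : Fin h, ∏ b ∈ Finset.Ioi a, F (Fin.castAdd i a) (Fin.castAdd i b)) *
      (∏ a : Fin i, ∏ b ∈ Finset.Ioi a, F (Fin.natAdd h a) (Fin.natAdd h b)) *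
      ∏ l : Fin h, ∏ k : Fin i, F (Fin.castAdd i l) (Fin.natAdd h k) := by
  have key : ∀ (n : ℕ) (G : Fin n → Fin n → M),
      ∏ a, ∏ b ∈ Finset.Ioi a, G a b = ∏ a, ∏ b, if a < b then G a b else 1 := by
    intro n G
    refine Finset.prod_congr rfl fun a _ => ?_
    rw [← Finset.prod_filter]
    refine Finset.prod_congr ?_ fun _ _ => rfl
    ext b; simp
  rw [key, key, key, Fin.prod_univ_add]
  simp_rw [Fin.prod_univ_add]
  have h1 : ∀ (l : Fin h) (k : Fin i), Fin.castAdd i l < Fin.natAdd h k := by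
    intro l k; rw [Fin.lt_def]; simp; omega
  have h2 : ∀ (l : Fin h) (k : Fin i), ¬ Fin.natAdd h k < Fin.castAdd i l := by
    intro l k; rw [Fin.lt_def]; simp; omega
  have h3 : ∀ (l k : Fin h), Fin.castAdd i l < Fin.castAdd i k ↔ l < k := by
    intro l k; rw [Fin.lt_def, Fin.lt_def]; simp
  have h4 : ∀ (l k : Fin i), Fin.natAdd h l < Fin.natAdd h k ↔ l < k := by
    intro l k; rw [Fin.lt_def, Fin.lt_def]; simp
  simp only [h1, h2, h3, h4, if_true, if_false, Finset.prod_const_one, one_mul,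
    Finset.prod_mul_distrib]
  rw [mul_right_comm]

theorem vander_desc {R : Type*} [CommRing R] {n : ℕ} (u : Fin n → R) :
    (Matrix.of fun a b : Fin n => u a ^ (n - 1 - (b : ℕ))).det =
      ∏ a, ∏ b ∈ Finset.Ioi a, (u a - u b) := by
  have h1 : (Matrix.of fun a b : Fin n => u a ^ (n - 1 - (b : ℕ))) =
      (Matrix.vandermonde (u ∘ Fin.rev)).submatrix Fin.revPerm Fin.revPerm := by
    ext a b
    simp [Matrix.vandermonde_apply, Fin.val_rev]
    congr 1; omega
  rw [h1, Matrix.det_submatrix_equiv_self, Matrix.det_vandermonde]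
  rw [Finset.prod_sigma', Finset.prod_sigma']
  refine Finset.prod_nbij' (fun p => ⟨p.2.rev, p.1.rev⟩) (fun p => ⟨p.2.rev, p.1.rev⟩) ?_ ?_ ?_ ?_ ?_
    <;> simp

/-- determinant with the first `h` rows variable -/
noncomputable def appDet {R : Type*} [CommRing R] {h i : ℕ} (W : Fin i → Fin (h + i) → R) :
    (Fin (h + i) → R) [⋀^Fin h]→ₗ[R] R where
  toFun v := (Matrix.of (Fin.append v W)).det
  map_update_add' := by
    intro _ m l x y
    have hu : ∀ z, (Matrix.of (Fin.append (Function.update m l z) W) : Matrix _ _ R) =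
        (Matrix.of (Fin.append m W) : Matrix _ _ R).updateRow (Fin.castAdd i l) z := by
      intro z
      ext a b
      refine Fin.addCases (fun a => ?_) (fun a => ?_) a
      · by_cases hal : a = l
        · subst hal; simp
        · rw [Matrix.updateRow_ne (by simpa using hal)]
          simp [hal]
      · rw [Matrix.updateRow_ne (by intro hh; have := congrArg Fin.val hh; simp at this; omega)]
        simp
    rw [hu, hu, hu, Matrix.det_updateRow_add]
  map_update_smul' := by
    intro _ m l c x
    have hu : ∀ z, (Matrix.of (Fin.append (Function.update m l z) W) : Matrix _ _ R) =
        (Matrix.of (Fin.append m W) : Matrix _ _ R).updateRow (Fin.castAdd i l) z := by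
      intro z
      ext a b
      refine Fin.addCases (fun a => ?_) (fun a => ?_) a
      · by_cases hal : a = l
        · subst hal; simp
        · rw [Matrix.updateRow_ne (by simpa using hal)]
          simp [hal]
      · rw [Matrix.updateRow_ne (by intro hh; have := congrArg Fin.val hh; simp at this; omega)]
        simp
    rw [hu, hu, Matrix.det_updateRow_smul, smul_eq_mul]
  map_eq_zero_of_eq' := by
    intro v a b hab hne
    refine Matrix.det_zero_of_row_eq (i := Fin.castAdd i a) (j := Fin.castAdd i b) ?_ ?_
    · simpa using hne
    · ext c; simp [hab]

theorem appDet_single {R : Type*} [CommRing R] {h i : ℕ} (w : Fin i → R)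
    (α : Fin h → Fin (h + i)) (β : Fin i → Fin (h + i)) (hα : StrictAnti α) (hβ : StrictAnti β)
    (hne : ∀ l k, α l ≠ β k) :
    appDet (fun k b => w k ^ (h + i - 1 - (b : ℕ)))
      ((fun j => Pi.single (Fin.rev j) (1 : R)) ∘ α) =
    (∏ l, ∏ k, if β k < α l then 1 else -1) *
      (Matrix.of fun a b : Fin i => w a ^ (β b : ℕ)).det := by
  set W : Fin i → Fin (h + i) → R := fun k b => w k ^ (h + i - 1 - (b : ℕ)) with hW
  set M : Matrix (Fin (h + i)) (Fin (h + i)) R :=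
    Matrix.of (Fin.append ((fun j => Pi.single (Fin.rev j) (1 : R)) ∘ α) W) with hM
  have hinj : Function.Injective (Fin.append (Fin.rev ∘ α) (Fin.rev ∘ β)) := by
    rw [Fin.append_injective_iff]
    refine ⟨Fin.rev_injective.comp hα.injective, Fin.rev_injective.comp hβ.injective, ?_⟩
    intro l k h
    exact hne l k (Fin.rev_injective h)
  let π : Equiv.Perm (Fin (h + i)) := Equiv.ofBijective _ (Finite.injective_iff_bijective.1 hinj)
  have hπl : ∀ l, π (Fin.castAdd i l) = Fin.rev (α l) := fun l => by simp [π]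
  have hπr : ∀ k, π (Fin.natAdd h k) = Fin.rev (β k) := fun k => by simp [π]
  have hdet := Matrix.det_permute' π M
  have hs : ((Equiv.Perm.sign π : ℤˣ) : ℤ) = ∏ l, ∏ k, if β k < α l then 1 else -1 := by
    rw [Equiv.Perm.sign_eq_prod_prod_Ioi, prod_Ioi_split]
    simp only [hπl, hπr, Fin.rev_lt_rev]
    rw [Finset.prod_eq_one (s := (univ : Finset (Fin h))), Finset.prod_eq_one (s := (univ : Finset (Fin i)))]
    · push_cast
      simp only [one_mul]
      refine Finset.prod_congr rfl fun l _ => Finset.prod_congr rfl fun k _ => ?_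
      split_ifs <;> rfl
    · intro a _
      refine Finset.prod_eq_one fun b hb => ?_
      rw [if_pos (hβ (by simpa using hb))]
    · intro a _
      refine Finset.prod_eq_one fun b hb => ?_
      rw [if_pos (hα (by simpa using hb))]
  have hblock : (M.submatrix id π).det = (Matrix.of fun a b : Fin i => w a ^ (β b : ℕ)).det := by
    rw [← Matrix.det_submatrix_equiv_self finSumFinEquiv]
    have : (M.submatrix id π).submatrix finSumFinEquiv finSumFinEquiv =
        Matrix.fromBlocks (1 : Matrix (Fin h) (Fin h) R) 0
          (Matrix.of fun k l => w k ^ (α l : ℕ)) (Matrix.of fun a b : Fin i => w a ^ (β b : ℕ)) := by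
      ext a b
      rcases a with a | a <;> rcases b with b | b
      · simp [hM, hπl, Matrix.one_apply, Pi.single_apply, hα.injective.eq_iff, eq_comm]
      · simp only [hM, Matrix.submatrix_apply, id, finSumFinEquiv_apply_left, finSumFinEquiv_apply_right, hπr]
        simp [(hne a b).symm]
      · simp [hM, hπl, hW, Fin.val_rev]
        congr 1; omega
      · simp [hM, hπr, hW, Fin.val_rev]
        congr 1; omega
    rw [this, Matrix.det_fromBlocks_zero₁₂, Matrix.det_one, one_mul]
  have hsq : (((Equiv.Perm.sign π : ℤˣ) : ℤ) : R) * (((Equiv.Perm.sign π : ℤˣ) : ℤ) : R) = 1 := by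
    rw [← Int.cast_mul, Int.units_coe_mul_self, Int.cast_one]
  have h0 : M.det = (((Equiv.Perm.sign π : ℤˣ) : ℤ) : R) * (M.submatrix id π).det := by
    rw [hdet, ← mul_assoc, hsq, one_mul]
  change M.det = _
  rw [h0, hblock, hs]
  push_cast
  rfl

theorem laplace_vander {R : Type*} [CommRing R] {h i : ℕ} (y : Fin h → R) (w : Fin i → R) :
    (∏ a, ∏ b ∈ Finset.Ioi a, (y a - y b)) * (∏ a, ∏ b ∈ Finset.Ioi a, (w a - w b)) *
      (∏ l, ∏ k, (y l - w k)) =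
    ∑ α : Fin h → Fin (h + i) with StrictAnti α,
      (Matrix.of fun a b : Fin h => y a ^ (α b : ℕ)).det *
      appDet (fun k b => w k ^ (h + i - 1 - (b : ℕ)))
      ((fun j => Pi.single (Fin.rev j) (1 : R)) ∘ α) := by
  have h1 := vander_desc (Fin.append y w)
  rw [prod_Ioi_split] at h1
  simp only [Fin.append_left, Fin.append_right] at h1
  rw [← h1]
  have h2 := alt_expand (appDet (R := R) (h := h) (fun k b => w k ^ (h + i - 1 - (b : ℕ))))
    (Matrix.of fun (l : Fin h) (j : Fin (h + i)) => y l ^ (j : ℕ))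
    (fun j => Pi.single (Fin.rev j) (1 : R))
  simp only [smul_eq_mul] at h2
  refine Eq.trans ?_ h2
  change _ = Matrix.det _
  congr 1
  ext a b
  refine Fin.addCases (fun a => ?_) (fun a => ?_) a
  · simp [Pi.single_apply]
    rw [Finset.sum_eq_single (Fin.rev b)]
    · simp [Fin.val_rev]; congr 1; omega
    · intro c _ hc
      rw [if_neg]; rintro rfl; simp at hc
    · simp
  · simp

theorem cauchy_binet {R : Type*} [CommRing R] {n N : ℕ} (A : Matrix (Fin n) (Fin N) R)
    (B : Matrix (Fin N) (Fin n) R) :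
    (A * B).det = ∑ α : Fin n → Fin N with StrictAnti α,
      (A.submatrix id α).det * (B.submatrix α id).det := by
  have h2 := alt_expand (Matrix.detRowAlternating (n := Fin n) (R := R)) A B
  refine Eq.trans ?_ h2
  change Matrix.det _ = Matrix.det _
  congr 1
  ext a b
  simp [Matrix.mul_apply]

theorem lt_conjP {lam : ℕ → ℕ} (ha : Antitone lam) {n : ℕ} (hn : ∀ k, n ≤ k → lam k = 0)
    (k m : ℕ) : k < conjP lam m ↔ m < lam k := by
  classical
  have hex : ∃ c, lam c ≤ m := ⟨n, by rw [hn n le_rfl]; exact Nat.zero_le _⟩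
  have hiff : ∀ k, m + 1 ≤ lam k ↔ k < Nat.find hex := by
    intro k
    rw [Nat.lt_find_iff]
    constructor
    · intro h j hj
      have := ha hj
      omega
    · intro h
      have := h k le_rfl
      omega
  have hc : conjP lam m = Nat.find hex := by
    unfold conjP
    simp_rw [hiff]
    exact (Nat.card_congr Fin.equivSubtype.symm).trans (Nat.card_fin _)
  rw [hc, ← hiff, Nat.succ_le_iff]

theorem conjP_antitone {lam : ℕ → ℕ} (ha : Antitone lam) {n : ℕ} (hn : ∀ k, n ≤ k → lam k = 0) :
    Antitone (conjP lam) := by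
  intro a b hab
  refine le_of_forall_lt fun k hk => ?_
  rw [lt_conjP ha hn] at hk ⊢
  omega

theorem conjP_zero {lam : ℕ → ℕ} (ha : Antitone lam) {n : ℕ} (hn : ∀ k, n ≤ k → lam k = 0)
    {i : ℕ} (hi : ∀ k, lam k ≤ i) (c : ℕ) (hc : i ≤ c) : conjP lam c = 0 := by
  by_contra h
  have h1 : 0 < conjP lam c := Nat.pos_of_ne_zero h
  rw [lt_conjP ha hn] at h1
  have := hi 0
  omega

theorem conjP_le {lam : ℕ → ℕ} (ha : Antitone lam) {n : ℕ} (hn : ∀ k, n ≤ k → lam k = 0)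
    (c : ℕ) : conjP lam c ≤ n := by
  by_contra h
  push Not at h
  rw [lt_conjP ha hn, hn n le_rfl] at h
  omega

theorem conjP_conjP {lam : ℕ → ℕ} (ha : Antitone lam) {n : ℕ} (hn : ∀ k, n ≤ k → lam k = 0) :
    conjP (conjP lam) = lam := by
  funext k
  have hz : ∀ c, lam 0 ≤ c → conjP lam c = 0 :=
    conjP_zero ha hn (fun k => ha (Nat.zero_le k))
  refine eq_of_forall_lt_iff fun m => ?_
  rw [lt_conjP (conjP_antitone ha hn) hz, lt_conjP ha hn]

theorem sum_conjP {lam : ℕ → ℕ} (ha : Antitone lam) {d : ℕ} (hn : ∀ k, d ≤ k → lam k = 0)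
    {i : ℕ} (hi : ∀ k, lam k ≤ i) :
    ∑ c : Fin i, conjP lam c = ∑ k : Fin d, lam k := by
  have key : ∀ a N : ℕ, a ≤ N → a = ∑ j : Fin N, if (j : ℕ) < a then 1 else 0 := by
    intro a N h
    rw [Fin.sum_univ_eq_sum_range (fun j => if j < a then 1 else 0)]
    rw [← Finset.sum_filter]
    have : (range N).filter (fun j => j < a) = range a := by ext j; simp; omega
    rw [this]; simp
  rw [Finset.sum_congr rfl fun (c : Fin i) _ => key (conjP lam c) d (conjP_le ha hn c),
    Finset.sum_congr rfl fun (k : Fin d) _ => key (lam k) i (hi k), Finset.sum_comm]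
  refine Finset.sum_congr rfl fun k _ => Finset.sum_congr rfl fun c _ => ?_
  simp only [lt_conjP ha hn]

theorem extF_lt {n : ℕ} {m : Fin n → ℕ} (f : (k : Fin n) → Fin (m k + 1)) (k : Fin n) :
    extF f k = f k := by
  simp [extF]

theorem extF_ge {n : ℕ} {m : Fin n → ℕ} (f : (k : Fin n) → Fin (m k + 1)) (k : ℕ) (hk : n ≤ k) :
    extF f k = 0 := by
  simp [extF, hk]

theorem extF_antitone {n i : ℕ} (f : Fin n → Fin (i + 1))
    (hf : ∀ a b : Fin n, a ≤ b → (f b : ℕ) ≤ f a) :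
    Antitone (extF (m := fun _ => i) (fun k => f k)) := by
  intro a b hab
  unfold extF
  by_cases hb : b < n
  · rw [dif_pos hb, dif_pos (lt_of_le_of_lt hab hb)]
    exact hf _ _ hab
  · rw [dif_neg hb]; exact Nat.zero_le _

theorem extF_le {n i : ℕ} (f : Fin n → Fin (i + 1)) (k : ℕ) :
    extF (m := fun _ => i) (fun k => f k) k ≤ i := by
  unfold extF
  split_ifs
  · exact Nat.lt_succ_iff.1 (Fin.is_lt _)
  · exact Nat.zero_le _

theorem det_prefix (i : ℕ) (ν : ℕ → ℕ) (ha : Antitone ν) (hz : ∀ c, i ≤ c → ν c = 0)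
    (φ : Fin i → ℕ → ℤ) :
    (Matrix.of fun k c : Fin i => ∑ t ∈ range (ν c + (i - 1 - (c : ℕ)) + 1), φ k t).det =
    ∑ ρ ∈ Fintype.piFinset (fun c : Fin i => Finset.Icc (ν (c + 1)) (ν c)),
      (Matrix.of fun k c : Fin i => φ k (ρ c + (i - 1 - (c : ℕ)))).det := by
  have h2 : (Matrix.of fun k c : Fin i =>
      ∑ t ∈ Finset.Icc (ν (c + 1)) (ν c), φ k (t + (i - 1 - (c : ℕ)))).det =
    ∑ ρ ∈ Fintype.piFinset (fun c : Fin i => Finset.Icc (ν (c + 1)) (ν c)),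
      (Matrix.of fun k c : Fin i => φ k (ρ c + (i - 1 - (c : ℕ)))).det := by
    have := (Matrix.detRowAlternating (n := Fin i) (R := ℤ)).toMultilinearMap.map_sum_finset
      (α := fun _ => ℕ)
      (fun (c : Fin i) (t : ℕ) => fun k : Fin i => φ k (t + (i - 1 - (c : ℕ))))
      (fun c : Fin i => Finset.Icc (ν (c + 1)) (ν c))
    rw [← Matrix.det_transpose]
    refine Eq.trans ?_ (this.trans ?_)
    · change _ = Matrix.det _
      congr 1
      ext c k
      simp
    · refine Finset.sum_congr rfl fun ρ _ => ?_
      rw [← Matrix.det_transpose]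
      rfl
  rw [← h2]
  have hB : ∀ (k c : Fin i), ∑ t ∈ Finset.Icc (ν (c + 1)) (ν c), φ k (t + (i - 1 - (c : ℕ))) =
      ∑ t ∈ Finset.Ico (ν (c + 1) + (i - 1 - (c : ℕ))) (ν c + (i - 1 - (c : ℕ)) + 1), φ k t := by
    intro k c
    rw [show ν c + (i - 1 - (c : ℕ)) + 1 = ν c + 1 + (i - 1 - (c : ℕ)) by ring,
      ← Finset.sum_Ico_add']
    rfl
  simp_rw [hB]
  rcases i with _ | n
  · simp
  rw [← Matrix.det_submatrix_equiv_self Fin.revPerm,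
    ← Matrix.det_submatrix_equiv_self Fin.revPerm (Matrix.of fun k c : Fin (n + 1) =>
      ∑ t ∈ Finset.Ico (ν (c + 1) + (n + 1 - 1 - (c : ℕ))) (ν c + (n + 1 - 1 - (c : ℕ)) + 1), φ k t)]
  refine Matrix.det_eq_of_forall_col_eq_smul_add_pred (fun _ => 1) ?_ ?_
  · intro k
    simp only [Matrix.submatrix_apply, Matrix.of_apply, Fin.revPerm_apply, Fin.val_rev]
    simp [hz (n + 1) le_rfl]
  · intro k j
    simp only [Matrix.submatrix_apply, Matrix.of_apply, Fin.revPerm_apply, Fin.val_rev,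
      Fin.val_succ, Fin.val_castSucc, one_mul]
    have hj := j.isLt
    have e1 : n + 1 - (↑j + 1 + 1) + 1 = n + 1 - (↑j + 1) := by omega
    rw [e1]
    have e2 : n + 1 - 1 - (n + 1 - (↑j + 1 + 1)) = n + 1 - 1 - (n + 1 - (↑j + 1)) + 1 := by omega
    rw [e2, add_comm (∑ t ∈ Ico _ _, _), ← add_assoc (ν (n + 1 - (↑j + 1))),
      Finset.sum_range_add_sum_Ico]
    have := ha (show n + 1 - (↑j + 1 + 1) ≤ n + 1 - (↑j + 1) by omega)
    omega

theorem sum_x {d i : ℕ} (mu : Fin d → Fin (i + 1))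
    (hmu : ∀ a b : Fin d, a ≤ b → mu b ≤ mu a) (F : (Fin i → ℕ) → ℤ) :
    (∑ x : Fin d → Fin 2,
      if (∀ k : Fin d, (x k : ℕ) ≤ (mu k : ℕ)) ∧
          (∀ a b : Fin d, a ≤ b → (mu b : ℕ) - (x b : ℕ) ≤ (mu a : ℕ) - (x a : ℕ)) then
        F (fun c : Fin i => conjP (extF (fun k =>
          (⟨(mu k : ℕ) - (x k : ℕ),
             lt_of_le_of_lt (Nat.sub_le _ _) (mu k).isLt⟩ : Fin (i + 1)))) c)
      else 0) =
    ∑ ρ ∈ Fintype.piFinset (fun c : Fin i => Finset.Icc (conjP (extF (fun k => mu k)) (c + 1))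
      (conjP (extF (fun k => mu k)) c)), F ρ := by
  have hμa : Antitone (extF (fun k => mu k)) := extF_antitone mu hmu
  have hμz : ∀ k, d ≤ k → extF (fun k => mu k) k = 0 := extF_ge _
  have hμl : ∀ k, extF (fun k => mu k) k ≤ i := extF_le mu
  let κ : (Fin d → Fin 2) → ℕ → ℕ := fun x => extF (fun k =>
          (⟨(mu k : ℕ) - (x k : ℕ),
             lt_of_le_of_lt (Nat.sub_le _ _) (mu k).isLt⟩ : Fin (i + 1)))
  have hκl : ∀ x k, κ x k ≤ i := fun x => extF_le _
  have hκz : ∀ x k, d ≤ k → κ x k = 0 := fun x => extF_ge _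
  have hκ : ∀ x (k : Fin d), κ x k = mu k - x k := fun x k => by
    change extF _ _ = _
    rw [extF_lt]
  have hκa : ∀ x : Fin d → Fin 2,
      (∀ a b : Fin d, a ≤ b → (mu b : ℕ) - (x b : ℕ) ≤ (mu a : ℕ) - (x a : ℕ)) → Antitone (κ x) :=
    fun x hx => extF_antitone _ hx
  have hκμ : ∀ x k, κ x k ≤ extF (fun k => mu k) k ∧ extF (fun k => mu k) k ≤ κ x k + 1 := by
    intro x k
    by_cases hk : k < d
    · have h1 := hκ x ⟨k, hk⟩
      have h2 := extF_lt (fun k => mu k) ⟨k, hk⟩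
      simp only at h1 h2
      have := (x ⟨k, hk⟩).isLt
      rw [h1, h2]; omega
    · rw [hκz x k (by omega), hμz k (by omega)]; omega
  rw [← Finset.sum_filter]
  refine Finset.sum_nbij (fun x c => conjP (κ x) c) ?_ ?_ ?_ ?_
  · intro x hx
    simp only [Finset.mem_filter, Finset.mem_univ, true_and] at hx
    simp only [Fintype.mem_piFinset, Finset.mem_Icc]
    intro c
    constructor
    · refine le_of_forall_lt fun k hk => ?_
      rw [lt_conjP hμa hμz] at hk
      rw [lt_conjP (hκa x hx.2) (hκz x)]
      have := hκμ x k
      omega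
    · refine le_of_forall_lt fun k hk => ?_
      rw [lt_conjP hμa hμz]
      rw [lt_conjP (hκa x hx.2) (hκz x)] at hk
      have := hκμ x k
      omega
  · intro x hx x' hx' heq
    simp only [Finset.coe_filter, Finset.mem_univ, true_and, Set.mem_ofPred_eq] at hx hx'
    have h1 : conjP (κ x) = conjP (κ x') := by
      funext c
      by_cases hc : c < i
      · exact congrFun heq ⟨c, hc⟩
      · rw [conjP_zero (hκa x hx.2) (hκz x) (hκl x) c (by omega),
          conjP_zero (hκa x' hx'.2) (hκz x') (hκl x') c (by omega)]
    have h2 : κ x = κ x' := by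
      rw [← conjP_conjP (hκa x hx.2) (hκz x), h1, conjP_conjP (hκa x' hx'.2) (hκz x')]
    funext k
    have h3 := congrFun h2 k
    rw [hκ, hκ] at h3
    have := hx.1 k
    have := hx'.1 k
    ext
    omega
  · intro ρ hρ
    simp only [Finset.mem_coe, Fintype.mem_piFinset, Finset.mem_Icc] at hρ
    have hνa := conjP_antitone hμa hμz
    have hνz := conjP_zero hμa hμz hμl
    let ρ' : ℕ → ℕ := fun c => if hc : c < i then ρ ⟨c, hc⟩ else 0
    have hρ'z : ∀ c, i ≤ c → ρ' c = 0 := fun c hc => by simp [ρ', hc]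
    have hρ'c : ∀ c : Fin i, ρ' c = ρ c := fun c => by simp [ρ']
    have hρ' : ∀ c, conjP (extF (fun k => mu k)) (c + 1) ≤ ρ' c ∧
        ρ' c ≤ conjP (extF (fun k => mu k)) c := by
      intro c
      by_cases hc : c < i
      · have := hρ ⟨c, hc⟩
        simpa [ρ', hc] using this
      · rw [hρ'z c (by omega), hνz (c+1) (by omega)]; omega
    have hρ'a : Antitone ρ' := antitone_nat_of_succ_le fun c =>
      (hρ' (c + 1)).2.trans (hρ' c).1
    have hk1 : ∀ k, conjP ρ' k ≤ extF (fun k => mu k) k := by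
      intro k
      refine le_of_forall_lt fun c hc => ?_
      rw [lt_conjP hρ'a hρ'z] at hc
      rw [← lt_conjP hμa hμz]
      exact hc.trans_le (hρ' c).2
    have hk2 : ∀ k, extF (fun k => mu k) k ≤ conjP ρ' k + 1 := by
      intro k
      by_contra hcon
      push Not at hcon
      rw [← lt_conjP hμa hμz] at hcon
      have := hcon.trans_le (hρ' _).1
      rw [← lt_conjP hρ'a hρ'z] at this
      omega
    let x : Fin d → Fin 2 := fun k => ⟨mu k - conjP ρ' k, by
      have := hk2 k
      rw [extF_lt] at this
      omega⟩
    have hκx : κ x = conjP ρ' := by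
      funext k
      by_cases hk : k < d
      · have h1 := hκ x ⟨k, hk⟩
        have h2 := hk1 k
        have h3 : extF (fun k => mu k) k = mu ⟨k, hk⟩ := extF_lt (fun k => mu k) ⟨k, hk⟩
        change κ x k = mu ⟨k, hk⟩ - (mu ⟨k, hk⟩ - conjP ρ' k) at h1
        omega
      · have := hk1 k
        rw [hμz k (by omega)] at this
        rw [hκz x k (by omega)]; omega
    refine ⟨x, ?_, ?_⟩
    · simp only [Finset.coe_filter, Finset.mem_univ, true_and, Set.mem_ofPred_eq]
      refine ⟨fun k => by simp [x], fun a b hab => ?_⟩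
      rw [← hκ x, ← hκ x, hκx]
      exact conjP_antitone hρ'a hρ'z hab
    · funext c
      simp only
      rw [hκx, conjP_conjP hρ'a hρ'z, hρ'c]
  · intro x _; rfl

theorem strictAnti_gap {n N : ℕ} {α : Fin n → Fin N} (hα : StrictAnti α) :
    ∀ (t : ℕ) (a b : Fin n), (b : ℕ) = a + t → (α b : ℕ) + t ≤ α a := by
  intro t
  induction t with
  | zero => intro a b hab; have : a = b := by ext; omega
            subst this; simp
  | succ t ih =>
    intro a b hab
    have hb := b.isLt
    have h1 := ih a ⟨a + t, by omega⟩ rfl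
    have h2 : α b < α ⟨a + t, by omega⟩ := hα (by rw [Fin.lt_def]; simp; omega)
    rw [Fin.lt_def] at h2
    omega

theorem sum_lam {A : Type*} [AddCommMonoid A] (h i : ℕ) (F : (Fin h → ℕ) → A) :
    ∑ α : Fin h → Fin (h + i) with StrictAnti α, F (fun l => α l) =
    ∑ lam : Fin h → Fin (i + 1),
      if (∀ a b : Fin h, a ≤ b → lam b ≤ lam a) then
        F (fun l => extF (fun k => lam k) l + (h - 1 - (l : ℕ))) else 0 := by
  symm
  rw [← Finset.sum_filter]
  refine Finset.sum_nbij (fun lam l => ⟨lam l + (h - 1 - (l : ℕ)), by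
      have := (lam l).isLt; have := l.isLt; omega⟩) ?_ ?_ ?_ ?_
  · intro lam hlam
    simp only [Finset.mem_filter, Finset.mem_univ, true_and] at hlam ⊢
    intro a b hab
    have h1 := hlam a b hab.le
    rw [Fin.lt_def] at hab ⊢
    rw [Fin.le_def] at h1
    have := b.isLt
    simp only
    omega
  · intro lam _ lam' _ heq
    funext l
    have := congrArg Fin.val (congrFun heq l)
    simp only at this
    ext
    omega
  · intro α hα
    simp only [Finset.coe_filter, Finset.mem_univ, true_and, Set.mem_ofPred_eq] at hα
    have hlow : ∀ l : Fin h, h - 1 - (l : ℕ) ≤ α l := by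
      intro l
      have hl := l.isLt
      have := strictAnti_gap hα (h - 1 - l) l ⟨h - 1, by omega⟩ (by simp; omega)
      omega
    have hup : ∀ l : Fin h, (α l : ℕ) + l ≤ h + i - 1 := by
      intro l
      have hl := l.isLt
      have := strictAnti_gap hα l ⟨0, by omega⟩ l (by simp)
      have := (α ⟨0, by omega⟩).isLt
      omega
    refine ⟨fun l => ⟨α l - (h - 1 - l), by have := hup l; have := l.isLt; omega⟩, ?_, ?_⟩
    · simp only [Finset.coe_filter, Finset.mem_univ, true_and, Set.mem_ofPred_eq]
      intro a b hab
      rw [Fin.le_def] at hab ⊢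
      have := strictAnti_gap hα (b - a) a b (by omega)
      have := hlow a
      have := hlow b
      have := a.isLt
      have := b.isLt
      simp only
      omega
    · funext l
      ext
      have := hlow l
      simp only
      omega
  · intro lam _
    congr 1
    funext l
    rw [extF_lt]

theorem sum_mu {A : Type*} [AddCommMonoid A] (i d N s : ℕ) (hN : d + i ≤ N)
    (F : (Fin i → ℕ) → A) :
    (∑ m : Fin i → Fin N with StrictAnti m,
      if s + ∑ c, (m c : ℕ) = d + ∑ c : Fin i, (i - 1 - (c : ℕ)) then F (fun c => m c) else 0) =
    ∑ mu : Fin d → Fin (i + 1),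
      if (∀ a b : Fin d, a ≤ b → mu b ≤ mu a) ∧ s + ∑ k, (mu k : ℕ) = d then
        F (fun c => conjP (extF (fun k => mu k)) c + (i - 1 - (c : ℕ))) else 0 := by
  symm
  rw [← Finset.sum_filter, ← Finset.sum_filter, Finset.filter_filter]
  have hex : ∀ mu : Fin d → Fin (i + 1), (∀ a b : Fin d, a ≤ b → mu b ≤ mu a) →
      Antitone (extF (fun k => mu k)) := fun mu hmu => extF_antitone mu hmu
  have hez : ∀ mu : Fin d → Fin (i + 1), ∀ k, d ≤ k → extF (fun k => mu k) k = 0 :=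
    fun mu => extF_ge _
  have hel : ∀ mu : Fin d → Fin (i + 1), ∀ k, extF (fun k => mu k) k ≤ i :=
    fun mu => extF_le mu
  have hsum : ∀ mu : Fin d → Fin (i + 1), (∀ a b : Fin d, a ≤ b → mu b ≤ mu a) →
      ∑ c : Fin i, conjP (extF (fun k => mu k)) c = ∑ k, (mu k : ℕ) := by
    intro mu hmu
    rw [sum_conjP (hex mu hmu) (hez mu) (hel mu)]
    exact Finset.sum_congr rfl fun k _ => extF_lt _ _
  let Φ : (Fin d → Fin (i + 1)) → Fin i → Fin N := fun mu c =>
    if hc : conjP (extF (fun k => mu k)) c + (i - 1 - (c : ℕ)) < N then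
      ⟨conjP (extF (fun k => mu k)) c + (i - 1 - (c : ℕ)), hc⟩
    else ⟨0, by have := c.isLt; omega⟩
  have hΦ : ∀ mu : Fin d → Fin (i + 1), (∀ a b : Fin d, a ≤ b → mu b ≤ mu a) → ∀ c,
      (Φ mu c : ℕ) = conjP (extF (fun k => mu k)) c + (i - 1 - (c : ℕ)) := by
    intro mu hmu c
    have h1 := conjP_le (hex mu hmu) (hez mu) c
    have := c.isLt
    simp only [Φ]
    rw [dif_pos (by omega)]
  refine Finset.sum_nbij Φ ?_ ?_ ?_ ?_
  · intro mu hmu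
    simp only [Finset.mem_filter, Finset.mem_univ, true_and] at hmu ⊢
    constructor
    · intro a b hab
      have h1 := conjP_antitone (hex mu hmu.1) (hez mu) (Fin.le_def.1 hab.le)
      rw [Fin.lt_def] at hab ⊢
      rw [hΦ mu hmu.1, hΦ mu hmu.1]
      have := b.isLt
      omega
    · simp_rw [hΦ mu hmu.1]
      rw [Finset.sum_add_distrib, hsum mu hmu.1, ← add_assoc, hmu.2]
  · intro mu hmu mu' hmu' heq
    simp only [Finset.coe_filter, Finset.mem_univ, true_and, Set.mem_ofPred_eq] at hmu hmu'
    have h1 : conjP (extF (fun k => mu k)) = conjP (extF (fun k => mu' k)) := by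
      funext c
      by_cases hc : c < i
      · have h2 := congrArg Fin.val (congrFun heq ⟨c, hc⟩)
        rw [hΦ mu hmu.1, hΦ mu' hmu'.1] at h2
        simp only at h2
        omega
      · rw [conjP_zero (hex mu hmu.1) (hez mu) (hel mu) c (by omega),
          conjP_zero (hex mu' hmu'.1) (hez mu') (hel mu') c (by omega)]
    have h2 : extF (fun k => mu k) = extF (fun k => mu' k) := by
      rw [← conjP_conjP (hex mu hmu.1) (hez mu), h1, conjP_conjP (hex mu' hmu'.1) (hez mu')]
    funext k
    have h3 := congrFun h2 k
    rw [extF_lt, extF_lt] at h3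
    ext
    exact h3
  · intro m hm
    simp only [Finset.coe_filter, Finset.mem_univ, true_and, Set.mem_ofPred_eq] at hm
    obtain ⟨hm, hs⟩ := hm
    have hlow : ∀ l : Fin i, i - 1 - (l : ℕ) ≤ m l := by
      intro l
      have hl := l.isLt
      have := strictAnti_gap hm (i - 1 - l) l ⟨i - 1, by omega⟩ (by simp; omega)
      omega
    let ν : ℕ → ℕ := fun c => if hc : c < i then m ⟨c, hc⟩ - (i - 1 - c) else 0
    have hνc : ∀ c : Fin i, ν c + (i - 1 - (c : ℕ)) = m c := fun c => by
      have := hlow c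
      simp [ν]; omega
    have hνz : ∀ c, i ≤ c → ν c = 0 := fun c hc => by simp [ν, hc]
    have hνa : Antitone ν := by
      intro a b hab
      by_cases hb : b < i
      · have h1 := hνc ⟨a, by omega⟩
        have h2 := hνc ⟨b, hb⟩
        have h3 := strictAnti_gap hm (b - a) ⟨a, by omega⟩ ⟨b, hb⟩ (by simp; omega)
        simp only at h1 h2
        omega
      · rw [hνz b (by omega)]; exact Nat.zero_le _
    have hsν : s + ∑ c : Fin i, ν c = d := by
      have : ∑ c : Fin i, ν c + ∑ c : Fin i, (i - 1 - (c : ℕ)) = ∑ c, (m c : ℕ) := by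
        rw [← Finset.sum_add_distrib]
        exact Finset.sum_congr rfl fun c _ => hνc c
      omega
    have hνd : ∀ c, ν c ≤ d := by
      intro c
      by_cases hc : c < i
      · have := Finset.single_le_sum (f := fun c : Fin i => ν c) (fun _ _ => Nat.zero_le _)
          (Finset.mem_univ ⟨c, hc⟩)
        simp only at this
        omega
      · rw [hνz c (by omega)]; exact Nat.zero_le _
    let mu : Fin d → Fin (i + 1) := fun k =>
      ⟨conjP ν k, Nat.lt_succ_iff.2 (conjP_le hνa hνz k)⟩
    have hmu : ∀ a b : Fin d, a ≤ b → mu b ≤ mu a := fun a b hab =>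
      conjP_antitone hνa hνz hab
    have hext : extF (fun k => mu k) = conjP ν := by
      funext k
      by_cases hk : k < d
      · exact extF_lt (fun k => mu k) ⟨k, hk⟩
      · rw [hez mu k (by omega), conjP_zero hνa hνz hνd k (by omega)]
    have hcc : conjP (extF (fun k => mu k)) = ν := by
      rw [hext, conjP_conjP hνa hνz]
    refine ⟨mu, ?_, ?_⟩
    · simp only [Finset.coe_filter, Finset.mem_univ, true_and, Set.mem_ofPred_eq]
      refine ⟨hmu, ?_⟩
      rw [← hsum mu hmu, hcc, hsν]
    · funext c
      ext
      rw [hΦ mu hmu, hcc, hνc]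
  · intro mu hmu
    simp only [Finset.mem_filter, Finset.mem_univ, true_and] at hmu
    congr 1
    funext c
    rw [hΦ mu hmu.1]

theorem laplace_lam {R : Type*} [CommRing R] {h i : ℕ} (y : Fin h → R) (w : Fin i → R) :
    (∏ a, ∏ b ∈ Finset.Ioi a, (y a - y b)) * (∏ a, ∏ b ∈ Finset.Ioi a, (w a - w b)) *
      (∏ l, ∏ k, (y l - w k)) =
    ∑ lam : Fin h → Fin (i + 1),
      if (∀ a b : Fin h, a ≤ b → lam b ≤ lam a) then
        (Matrix.of fun a b : Fin h =>
          y a ^ (extF (fun k => lam k) b + (h - 1 - (b : ℕ)))).det *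
        ((∏ l : Fin h, (-1) ^ (i - (lam l : ℕ))) *
          (Matrix.of fun a b : Fin i =>
            w a ^ (complConj i h (extF (fun k => lam k)) b + (i - 1 - (b : ℕ)))).det)
      else 0 := by
  rw [laplace_vander]
  classical
  let F : (Fin h → ℕ) → R := fun α =>
    (Matrix.of fun a b : Fin h => y a ^ (α b : ℕ)).det *
      appDet (fun k b => w k ^ (h + i - 1 - (b : ℕ)))
      (fun l => if hl : α l < h + i then Pi.single (Fin.rev ⟨α l, hl⟩) (1 : R) else 0)
  have h1 := sum_lam h i F
  refine Eq.trans ?_ (h1.trans ?_)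
  · refine Finset.sum_congr rfl fun α _ => ?_
    simp only [F]
    congr 2
    funext l
    simp
  · refine Finset.sum_congr rfl fun lam _ => ?_
    split_ifs with hlam
    · simp only [F]
      congr 1
      have hla : Antitone (extF (fun k => lam k)) := extF_antitone lam hlam
      have hlz : ∀ k, h ≤ k → extF (fun k => lam k) k = 0 := extF_ge _
      have hll := fun k => extF_le lam k
      let α : Fin h → Fin (h + i) := fun l => ⟨lam l + (h - 1 - (l : ℕ)), by
        have := (lam l).isLt; have := l.isLt; omega⟩
      have hcle := conjP_le hla hlz
      have hcomp : ∀ k : Fin i, complConj i h (extF (fun k => lam k)) k =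
          h - conjP (extF (fun k => lam k)) (i - 1 - k) := fun k => by simp [complConj]
      let β : Fin i → Fin (h + i) := fun k =>
        ⟨complConj i h (extF (fun k => lam k)) k + (i - 1 - (k : ℕ)), by
          rw [hcomp]; have := k.isLt; omega⟩
      have hα : StrictAnti α := by
        intro a b hab
        have h1 := hlam a b hab.le
        rw [Fin.lt_def] at hab ⊢
        rw [Fin.le_def] at h1
        have := b.isLt
        simp only [α]
        omega
      have hβ : StrictAnti β := by
        intro a b hab
        rw [Fin.lt_def] at hab ⊢
        have := b.isLt
        simp only [β]
        rw [hcomp, hcomp]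
        have := conjP_antitone hla hlz (show i - 1 - (b : ℕ) ≤ i - 1 - a by omega)
        omega
      have hlt : ∀ (l : Fin h) (k : Fin i), (i - 1 - (k : ℕ) < lam l → β k < α l) ∧
          (¬ i - 1 - (k : ℕ) < lam l → α l < β k) := by
        intro l k
        have h1 := lt_conjP hla hlz l (i - 1 - k)
        rw [extF_lt] at h1
        have h2 := hcle (i - 1 - k)
        have := l.isLt
        have := k.isLt
        simp only [Fin.lt_def, α, β, hcomp]
        constructor
        · intro h3
          have := h1.2 h3
          omega
        · intro h3
          have := fun h4 => h3 (h1.1 h4)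
          omega
      have hne : ∀ l k, α l ≠ β k := by
        intro l k
        by_cases hk : i - 1 - (k : ℕ) < lam l
        · exact ((hlt l k).1 hk).ne'
        · exact ((hlt l k).2 hk).ne
      have h2 := appDet_single w α β hα hβ hne
      have h3 : (fun l : Fin h => if hl : extF (fun k => lam k) l + (h - 1 - (l : ℕ)) < h + i then
          (Pi.single (Fin.rev ⟨extF (fun k => lam k) l + (h - 1 - (l : ℕ)), hl⟩) (1 : R) :
            Fin (h + i) → R) else 0) =
          (fun j => Pi.single (Fin.rev j) (1 : R)) ∘ α := by
        funext l
        have h4 : extF (fun k => lam k) l + (h - 1 - (l : ℕ)) = α l := by rw [extF_lt]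
        rw [dif_pos (by rw [h4]; exact (α l).isLt)]
        simp only [Function.comp]
        congr 2
        ext
        exact h4
      rw [h3, h2]
      congr 1
      refine Finset.prod_congr rfl fun l _ => ?_
      have h5 : ∀ k, (if β k < α l then (1 : R) else -1) =
          if i - 1 - (k : ℕ) < lam l then 1 else -1 := by
        intro k
        by_cases hk : i - 1 - (k : ℕ) < lam l
        · rw [if_pos hk, if_pos ((hlt l k).1 hk)]
        · rw [if_neg hk, if_neg (not_lt.2 ((hlt l k).2 hk).le)]
      simp_rw [h5]
      rw [← Equiv.prod_comp Fin.revPerm]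
      have h6 : ∀ k : Fin i, i - 1 - (Fin.revPerm k : ℕ) = k := by
        intro k; have := k.isLt; simp [Fin.val_rev]; omega
      simp_rw [h6]
      rw [Fin.prod_univ_eq_prod_range (fun k => if k < (lam l : ℕ) then (1 : R) else -1)]
      have hl := (lam l).isLt
      rw [← Finset.prod_range_mul_prod_Ico _ (show (lam l : ℕ) ≤ i by omega)]
      rw [Finset.prod_eq_one, one_mul, Finset.prod_congr rfl (g := fun _ => (-1 : R))]
      · simp
      · intro k hk
        rw [if_neg]; simp at hk; omega
      · intro k hk
        rw [if_pos]; simpa using hk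
    · rfl

theorem hc_mul_hom {σ : Type*} {P Q : MvPolynomial σ ℤ} {q : ℕ} (hQ : Q.IsHomogeneous q) (d : ℕ) :
    homogeneousComponent (d + q) (P * Q) = homogeneousComponent d P * Q := by
  conv_lhs => rw [← sum_homogeneousComponent P, Finset.sum_mul, map_sum]
  have h1 : ∀ j, homogeneousComponent (d + q) (homogeneousComponent j P * Q) =
      if d = j then homogeneousComponent j P * Q else 0 := by
    intro j
    rw [homogeneousComponent_of_mem ((homogeneousComponent_isHomogeneous j P).mul hQ)]
    simp
  simp_rw [h1]
  rw [Finset.sum_ite_eq]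
  split_ifs with h
  · rfl
  · rw [homogeneousComponent_eq_zero, zero_mul]
    simp at h
    omega

theorem hc_mul_hom_zero {σ : Type*} {P Q : MvPolynomial σ ℤ} {q : ℕ} (hQ : Q.IsHomogeneous q)
    (d : ℕ) (hd : d < q) :
    homogeneousComponent d (P * Q) = 0 := by
  conv_lhs => rw [← sum_homogeneousComponent P, Finset.sum_mul, map_sum]
  refine Finset.sum_eq_zero fun j _ => ?_
  rw [homogeneousComponent_of_mem ((homogeneousComponent_isHomogeneous j P).mul hQ)]
  rw [if_neg (by omega)]

theorem hc_trunc (i h d K : ℕ) (hK : d < K) (P : MvPolynomial (Fin i ⊕ Fin h) ℤ) :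
    homogeneousComponent d (P * ∑ r ∈ Finset.range (d + 1), (-1) ^ r * hsymX i h r) =
    homogeneousComponent d (P * ∏ a : Fin i, ∑ r ∈ range K, (-X (Sum.inl a)) ^ r) := by
  let g : (Fin i → ℕ) → MvPolynomial (Fin i ⊕ Fin h) ℤ := fun f =>
    ∏ k, (-X (Sum.inl k)) ^ f k
  have hg : ∀ f, g f = (-1) ^ (∑ k, f k) * ∏ k, X (Sum.inl k) ^ f k := by
    intro f
    simp only [g]
    rw [← Finset.prod_pow_eq_pow_sum, ← Finset.prod_mul_distrib]
    exact Finset.prod_congr rfl fun k _ => by rw [neg_pow]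
  have hghom : ∀ f, (g f).IsHomogeneous (∑ k, f k) := by
    intro f
    refine IsHomogeneous.prod _ _ _ fun k _ => ?_
    simpa using ((isHomogeneous_X ℤ (Sum.inl k : Fin i ⊕ Fin h)).neg).pow (f k)
  have h2 : ∏ a : Fin i, ∑ r ∈ range K, (-X (Sum.inl a) : MvPolynomial (Fin i ⊕ Fin h) ℤ) ^ r =
      ∑ f ∈ Fintype.piFinset (fun _ : Fin i => range K), g f := by
    rw [Finset.prod_univ_sum]
  have h1 : ∑ r ∈ Finset.range (d + 1), (-1) ^ r * hsymX i h r =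
      ∑ f ∈ Fintype.piFinset (fun _ : Fin i => range K) with (∑ k, f k) ∈ range (d + 1), g f := by
    rw [← Finset.sum_fiberwise_of_maps_to (t := range (d + 1)) (g := fun f : Fin i → ℕ => ∑ k, f k)
      (by intro f hf; exact (Finset.mem_filter.1 hf).2)]
    refine Finset.sum_congr rfl fun r hr => ?_
    rw [hsymX, Finset.mul_sum]
    refine Finset.sum_congr ?_ ?_
    · ext f
      simp only [Finset.Nat.mem_antidiagonalTuple, Finset.mem_filter, Fintype.mem_piFinset,
        Finset.mem_range] at hr ⊢
      constructor
      · intro hf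
        refine ⟨⟨fun a => ?_, by omega⟩, hf⟩
        have := Finset.single_le_sum (f := f) (fun _ _ => Nat.zero_le _) (Finset.mem_univ a)
        omega
      · exact fun hf => hf.2
    · intro f hf
      rw [hg, (Finset.mem_filter.1 hf).2]
  rw [h1, h2, ← Finset.sum_filter_add_sum_filter_not (Fintype.piFinset (fun _ : Fin i => range K))
    (fun f => (∑ k, f k) ∈ range (d + 1)), mul_add, map_add, left_eq_add, Finset.mul_sum, map_sum]
  refine Finset.sum_eq_zero fun f hf => ?_
  refine hc_mul_hom_zero (hghom f) d ?_
  have := (Finset.mem_filter.1 hf).2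
  simp at this
  omega

/-- the one-variable polynomial `(T-1)^b * ∑_{r<K} (-T)^r` -/
noncomputable def Qp (K b : ℕ) : Polynomial ℤ :=
  (Polynomial.X - 1) ^ b * ∑ r ∈ range K, (-Polynomial.X) ^ r

theorem Qp_natDegree (K b : ℕ) : (Qp K b).natDegree ≤ b + K := by
  unfold Qp
  refine Polynomial.natDegree_mul_le.trans (add_le_add ?_ ?_)
  · refine Polynomial.natDegree_pow_le.trans ?_
    have : (Polynomial.X - 1 : Polynomial ℤ).natDegree ≤ 1 := by
      simpa using (Polynomial.natDegree_X_sub_C (1 : ℤ)).le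
    nlinarith
  · refine Polynomial.natDegree_sum_le_of_forall_le _ _ fun r hr => ?_
    refine Polynomial.natDegree_pow_le.trans ?_
    rw [Polynomial.natDegree_neg, Polynomial.natDegree_X, mul_one]
    exact (Finset.mem_range.1 hr).le

theorem Qp_coeff (K b m : ℕ) (hm : m < K) :
    (Qp K b).coeff m = (-1) ^ b * ((-1) ^ m * ∑ t ∈ range (m + 1), (b.choose t : ℤ)) := by
  unfold Qp
  rw [Polynomial.coeff_mul, Finset.Nat.sum_antidiagonal_eq_sum_range_succ_mk, Finset.mul_sum,
    Finset.mul_sum]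
  refine Finset.sum_congr rfl fun t ht => ?_
  have ht' : t ≤ m := Nat.lt_succ_iff.1 (Finset.mem_range.1 ht)
  have h1 : (∑ r ∈ range K, (-Polynomial.X : Polynomial ℤ) ^ r).coeff (m - t) = (-1) ^ (m - t) := by
    rw [Polynomial.finsetSum_coeff, Finset.sum_eq_single (m - t)]
    · rw [neg_pow, ← Polynomial.C_1, ← Polynomial.C_neg, ← Polynomial.C_pow, Polynomial.coeff_C_mul]
      simp
    · intro r _ hr
      rw [neg_pow, ← Polynomial.C_1, ← Polynomial.C_neg, ← Polynomial.C_pow, Polynomial.coeff_C_mul,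
        Polynomial.coeff_X_pow, if_neg (Ne.symm hr), mul_zero]
    · intro hr
      exact absurd (Finset.mem_range.2 (by omega)) hr
  have h2 : ((Polynomial.X - 1 : Polynomial ℤ) ^ b).coeff t = (-1) ^ (b - t) * (b.choose t : ℤ) := by
    have := Polynomial.coeff_X_add_C_pow (-1 : ℤ) b t
    rwa [Polynomial.C_neg, Polynomial.C_1, ← sub_eq_add_neg] at this
  simp only [h1, h2]
  by_cases hbt : t ≤ b
  · have e1 : (-1 : ℤ) ^ b = (-1) ^ (b - t) * (-1) ^ t := by rw [← pow_add]; congr 1; omega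
    have e2 : (-1 : ℤ) ^ m = (-1) ^ (m - t) * (-1) ^ t := by rw [← pow_add]; congr 1; omega
    have e3 : (-1 : ℤ) ^ t * (-1) ^ t = 1 := by rw [← mul_pow]; simp
    rw [e1, e2]
    linear_combination (-((-1 : ℤ) ^ (b - t) * (-1) ^ (m - t) * (b.choose t : ℤ))) * e3
  · rw [Nat.choose_eq_zero_of_lt (by omega)]; simp

theorem expand_x {R : Type*} [CommRing R] {i N K : ℕ} (x : Fin i → R) (β : Fin i → ℕ)
    (hN : ∀ b, β b + K < N) :
    (∏ a, ∑ r ∈ range K, (-x a) ^ r) * (Matrix.of fun a b : Fin i => (x a - 1) ^ β b).det =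
    ∑ m : Fin i → Fin N with StrictAnti m,
      (Matrix.of fun a c : Fin i => x a ^ (m c : ℕ)).det *
      (((Matrix.of fun b c : Fin i => (Qp K (β b)).coeff (m c)).det : ℤ) : R) := by
  rw [← Matrix.det_mul_column]
  have h1 : (Matrix.of fun a b : Fin i => (∑ r ∈ range K, (-x a) ^ r) *
      (Matrix.of fun a b : Fin i => (x a - 1) ^ β b) a b) =
      (Matrix.of fun (a : Fin i) (j : Fin N) => x a ^ (j : ℕ)) *
      (Matrix.of fun (j : Fin N) (b : Fin i) => (((Qp K (β b)).coeff j : ℤ) : R)) := by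
    ext a b
    have h2 : Polynomial.aeval (x a) (Qp K (β b)) =
        (∑ r ∈ range K, (-x a) ^ r) * (x a - 1) ^ β b := by
      simp [Qp, mul_comm]
    rw [Matrix.mul_apply]
    simp only [Matrix.of_apply]
    rw [← h2, Polynomial.aeval_eq_sum_range' (n := N)
      (lt_of_le_of_lt (Qp_natDegree _ _) (hN b)), Finset.sum_range]
    refine Finset.sum_congr rfl fun j _ => ?_
    rw [zsmul_eq_mul, mul_comm]
  rw [h1, cauchy_binet]
  refine Finset.sum_congr rfl fun m _ => ?_
  congr 1
  rw [← Matrix.det_transpose, ← eq_intCast (Int.castRingHom R), RingHom.map_det]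
  congr 1

theorem neg_one_pow_sub {a b : ℕ} (h : b ≤ a) : (-1 : ℤ) ^ (a - b) = (-1) ^ a * (-1) ^ b := by
  have e3 : (-1 : ℤ) ^ b * (-1) ^ b = 1 := by rw [← mul_pow]; simp
  have e1 : (-1 : ℤ) ^ a = (-1) ^ (a - b) * (-1) ^ b := by rw [← pow_add]; congr 1; omega
  rw [e1, mul_assoc, e3, mul_one]

theorem coef_id (i h d K : ℕ) (hK : d + i ≤ K) (lam : Fin h → Fin (i + 1))
    (hlam : ∀ a b : Fin h, a ≤ b → lam b ≤ lam a)
    (mu : Fin d → Fin (i + 1)) (hmu : ∀ a b : Fin d, a ≤ b → mu b ≤ mu a) :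
    (∏ l : Fin h, (-1 : ℤ) ^ (i - (lam l : ℕ))) *
      (Matrix.of fun b c : Fin i => (Qp K (complConj i h (extF (fun k => lam k)) b +
        (i - 1 - (b : ℕ)))).coeff (conjP (extF (fun k => mu k)) c + (i - 1 - (c : ℕ)))).det =
    (-1 : ℤ) ^ (∑ k : Fin d, (mu k : ℕ))
      * ∑ x : Fin d → Fin 2,
        if (∀ k : Fin d, (x k : ℕ) ≤ (mu k : ℕ)) ∧
            (∀ a b : Fin d, a ≤ b → (mu b : ℕ) - (x b : ℕ) ≤ (mu a : ℕ) - (x a : ℕ)) then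
          Edet i (complConj i h (extF (fun k => lam k)))
            (conjP (extF (fun k =>
              (⟨(mu k : ℕ) - (x k : ℕ),
                lt_of_le_of_lt (Nat.sub_le _ _) (mu k).isLt⟩ : Fin (i + 1)))))
        else 0 := by
  have hla : Antitone (extF (fun k => lam k)) := extF_antitone lam hlam
  have hlz : ∀ k, h ≤ k → extF (fun k => lam k) k = 0 := extF_ge _
  have hma : Antitone (extF (fun k => mu k)) := extF_antitone mu hmu
  have hmz : ∀ k, d ≤ k → extF (fun k => mu k) k = 0 := extF_ge _
  have hx := sum_x mu hmu (fun ρ => (Matrix.of fun k l : Fin i =>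
    (((complConj i h (extF (fun k => lam k)) k + (i - 1 - (k : ℕ))).choose
      (ρ l + (i - 1 - (l : ℕ))) : ℕ) : ℤ)).det)
  have hp := det_prefix i (conjP (extF (fun k => mu k))) (conjP_antitone hma hmz)
    (conjP_zero hma hmz (extF_le mu)) (fun k t =>
      (((complConj i h (extF (fun k => lam k)) k + (i - 1 - (k : ℕ))).choose t : ℕ) : ℤ))
  refine Eq.trans ?_ (congrArg _ (hp.trans hx.symm))
  have hc : (Matrix.of fun b c : Fin i => (Qp K (complConj i h (extF (fun k => lam k)) b +
        (i - 1 - (b : ℕ)))).coeff (conjP (extF (fun k => mu k)) c + (i - 1 - (c : ℕ)))) =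
      Matrix.of fun b c : Fin i => (-1 : ℤ) ^ (complConj i h (extF (fun k => lam k)) b +
        (i - 1 - (b : ℕ))) * (Matrix.of fun b c : Fin i =>
          (-1 : ℤ) ^ (conjP (extF (fun k => mu k)) c + (i - 1 - (c : ℕ))) *
          (Matrix.of fun k c : Fin i => ∑ t ∈ range (conjP (extF (fun k => mu k)) c +
            (i - 1 - (c : ℕ)) + 1), (((complConj i h (extF (fun k => lam k)) k +
              (i - 1 - (k : ℕ))).choose t : ℕ) : ℤ)) b c) b c := by
    ext b c
    simp only [Matrix.of_apply]
    rw [Qp_coeff]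
    have := conjP_le hma hmz c
    have := c.isLt
    omega
  rw [hc, Matrix.det_mul_column, Matrix.det_mul_row, ← mul_assoc, ← mul_assoc]
  congr 1
  have hcomp : ∀ k : Fin i, complConj i h (extF (fun k => lam k)) k =
      h - conjP (extF (fun k => lam k)) (i - 1 - k) := fun k => by simp [complConj]
  simp_rw [hcomp, pow_add, neg_one_pow_sub (conjP_le hla hlz _),
    fun l => neg_one_pow_sub (Nat.lt_succ_iff.1 (lam l).isLt)]
  simp_rw [Finset.prod_mul_distrib]
  have hs1 : ∏ k : Fin i, (-1 : ℤ) ^ conjP (extF (fun k => lam k)) (i - 1 - (k : ℕ)) =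
      ∏ l : Fin h, (-1 : ℤ) ^ (lam l : ℕ) := by
    rw [← Equiv.prod_comp Fin.revPerm]
    have h6 : ∀ k : Fin i, i - 1 - (Fin.revPerm k : ℕ) = k := by
      intro k; have := k.isLt; simp [Fin.val_rev]; omega
    simp_rw [h6]
    rw [Finset.prod_pow_eq_pow_sum, Finset.prod_pow_eq_pow_sum,
      sum_conjP hla hlz (extF_le lam)]
    congr 1
    exact Finset.sum_congr rfl fun k _ => extF_lt _ _
  have hs2 : ∏ c : Fin i, (-1 : ℤ) ^ conjP (extF (fun k => mu k)) (c : ℕ) =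
      (-1) ^ (∑ k : Fin d, (mu k : ℕ)) := by
    rw [Finset.prod_pow_eq_pow_sum, sum_conjP hma hmz (extF_le mu)]
    congr 1
    exact Finset.sum_congr rfl fun k _ => extF_lt _ _
  rw [hs1, hs2]
  simp only [Finset.prod_const, Finset.card_univ, Fintype.card_fin, ← pow_mul]
  rw [mul_comm h i]
  have sq : ∀ n : ℕ, (-1 : ℤ) ^ n * (-1) ^ n = 1 := fun n => by rw [← mul_pow]; simp
  rw [Finset.prod_pow_eq_pow_sum, Finset.prod_pow_eq_pow_sum]
  generalize (-1 : ℤ) ^ (∑ k : Fin d, (mu k : ℕ)) = M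
  have s1 := sq (i * h)
  have s2 := sq (∑ l : Fin h, (lam l : ℕ))
  have s3 := sq (∑ c : Fin i, (i - 1 - (c : ℕ)))
  generalize (-1 : ℤ) ^ (i * h) = a at *
  generalize (-1 : ℤ) ^ (∑ l : Fin h, (lam l : ℕ)) = b at *
  generalize (-1 : ℤ) ^ (∑ c : Fin i, (i - 1 - (c : ℕ))) = c at *
  linear_combination (b * b * c * c * M) * s1 + (c * c * M) * s2 + M * s3

theorem det_hom {n : ℕ} {τ : Type*} (f : Fin n → τ) (e : Fin n → ℕ) :
    (Matrix.of fun a b : Fin n => (X (f a) : MvPolynomial τ ℤ) ^ e b).det.IsHomogeneous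
      (∑ b, e b) := by
  rw [Matrix.det_apply]
  refine IsHomogeneous.sum _ _ _ fun σ _ => ?_
  have h1 : (∏ b, (Matrix.of fun a b : Fin n => (X (f a) : MvPolynomial τ ℤ) ^ e b) (σ b)
      b).IsHomogeneous (∑ b, e b) := by
    refine IsHomogeneous.prod _ _ _ fun b _ => ?_
    simpa using (isHomogeneous_X ℤ (f (σ b))).pow (e b)
  rcases Int.units_eq_one_or (Equiv.Perm.sign σ) with hs | hs
  · rw [hs, one_smul]; exact h1
  · rw [hs, Units.neg_smul, one_smul]; exact h1.neg

theorem rename_det {n : ℕ} {τ : Type*} (f : Fin n → τ) (e : Fin n → ℕ) :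
    rename f (Matrix.of fun a b : Fin n => (X a : MvPolynomial (Fin n) ℤ) ^ e b).det =
    (Matrix.of fun a b : Fin n => (X (f a) : MvPolynomial τ ℤ) ^ e b).det := by
  rw [AlgHom.map_det]
  congr 1
  ext1 a b
  simp

theorem prod_pairs {M : Type*} [CommMonoid M] {n : ℕ} (F : Fin n × Fin n → M) :
    ∏ q ∈ Finset.univ.filter (fun q : Fin n × Fin n => q.1 < q.2), F q =
    ∏ a, ∏ b ∈ Finset.Ioi a, F (a, b) := by
  rw [Finset.prod_filter, Fintype.prod_prod_type]
  refine Finset.prod_congr rfl fun a _ => ?_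
  rw [← Finset.prod_filter]
  refine Finset.prod_congr ?_ fun _ _ => rfl
  ext b; simp

theorem thom_general (i h d : ℕ)
    (Sx : (ℕ → ℕ) → MvPolynomial (Fin i) ℤ)
    (Sy : (ℕ → ℕ) → MvPolynomial (Fin h) ℤ)
    -- bialternant characterization of the Schur polynomials in the x-variables:
    (hSx : ∀ nu : ℕ → ℕ, Antitone nu → (∀ k, i ≤ k → nu k = 0) →
      Sx nu * ∏ q ∈ Finset.univ.filter (fun q : Fin i × Fin i => q.1 < q.2),
          (X q.1 - X q.2)
        = (Matrix.of fun a b : Fin i =>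
            (X a : MvPolynomial (Fin i) ℤ) ^ (nu (b : ℕ) + (i - 1 - (b : ℕ)))).det)
    -- bialternant characterization of the Schur polynomials in the y-variables:
    (hSy : ∀ nu : ℕ → ℕ, Antitone nu → (∀ k, h ≤ k → nu k = 0) →
      Sy nu * ∏ q ∈ Finset.univ.filter (fun q : Fin h × Fin h => q.1 < q.2),
          (X q.1 - X q.2)
        = (Matrix.of fun a b : Fin h =>
            (X a : MvPolynomial (Fin h) ℤ) ^ (nu (b : ℕ) + (h - 1 - (b : ℕ)))).det) :
    MvPolynomial.homogeneousComponent (d)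
        ((∏ k : Fin i, ∏ l : Fin h,
            (1 + X (Sum.inr l) - X (Sum.inl k) : MvPolynomial (Fin i ⊕ Fin h) ℤ))
          * ∑ r ∈ Finset.range ((d) + 1), (-1) ^ r * hsymX i h r)
      = ∑ lam : Fin h → Fin (i + 1),
          if (∀ a b : Fin h, a ≤ b → lam b ≤ lam a) then
            ∑ mu : Fin (d) → Fin (i + 1),
              if (∀ a b : Fin (d), a ≤ b → mu b ≤ mu a) ∧
                  ((∑ l : Fin h, (lam l : ℕ)) + (∑ k : Fin (d), (mu k : ℕ))
                    = d) then
                C ((-1 : ℤ) ^ (∑ k : Fin (d), (mu k : ℕ))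
                    * ∑ x : Fin (d) → Fin 2,
                        if (∀ k : Fin (d), (x k : ℕ) ≤ (mu k : ℕ)) ∧
                            (∀ a b : Fin (d), a ≤ b →
                              (mu b : ℕ) - (x b : ℕ) ≤ (mu a : ℕ) - (x a : ℕ)) then
                          Edet i (complConj i h (extF (fun k => lam k)))
                            (conjP (extF (fun k =>
                              (⟨(mu k : ℕ) - (x k : ℕ),
                                lt_of_le_of_lt (Nat.sub_le _ _) (mu k).isLt⟩ : Fin (i + 1)))))
                        else 0)
                  * rename Sum.inl (Sx (conjP (extF (fun k => mu k))))
                  * rename Sum.inr (Sy (extF (fun k => lam k)))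
              else 0
          else 0 := by
  classical
  set K := d + i with hK
  set N := h + i + K + 1 with hN
  let x : Fin i → MvPolynomial (Fin i ⊕ Fin h) ℤ := fun k => X (Sum.inl k)
  let y : Fin h → MvPolynomial (Fin i ⊕ Fin h) ℤ := fun l => X (Sum.inr l)
  set P : MvPolynomial (Fin i ⊕ Fin h) ℤ := ∏ k : Fin i, ∏ l : Fin h,
            (1 + X (Sum.inr l) - X (Sum.inl k) : MvPolynomial (Fin i ⊕ Fin h) ℤ) with hP
  set Vx := ∏ a, ∏ b ∈ Finset.Ioi a, (x a - x b) with hVx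
  set Vy := ∏ a, ∏ b ∈ Finset.Ioi a, (y a - y b) with hVy
  have hVx0 : Vx ≠ 0 := by
    refine Finset.prod_ne_zero_iff.2 fun a _ => Finset.prod_ne_zero_iff.2 fun b hb => ?_
    rw [sub_ne_zero]
    intro hab
    have := Sum.inl_injective (X_injective hab)
    simp [this] at hb
  have hVy0 : Vy ≠ 0 := by
    refine Finset.prod_ne_zero_iff.2 fun a _ => Finset.prod_ne_zero_iff.2 fun b hb => ?_
    rw [sub_ne_zero]
    intro hab
    have := Sum.inr_injective (X_injective hab)
    simp [this] at hb
  have hVxh : Vx.IsHomogeneous (∑ c : Fin i, (i - 1 - (c : ℕ))) := by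
    rw [hVx, ← vander_desc]
    exact det_hom (fun k => Sum.inl k) _
  have hVyh : Vy.IsHomogeneous (∑ c : Fin h, (h - 1 - (c : ℕ))) := by
    rw [hVy, ← vander_desc]
    exact det_hom (fun k => Sum.inr k) _
  rw [hc_trunc i h d (K + 1) (by omega)]
  set G : MvPolynomial (Fin i ⊕ Fin h) ℤ := ∏ a : Fin i, ∑ r ∈ range (K + 1), (-X (Sum.inl a)) ^ r with hG
  refine mul_right_cancel₀ (mul_ne_zero hVx0 hVy0) ?_
  rw [← hc_mul_hom (hVxh.mul hVyh)]
  have hlap := laplace_lam y (fun k => x k - 1)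
  have e1 : P * G * (Vx * Vy) = G * (Vy * Vx * P) := by ring
  have e2 : Vy * Vx * P = (∏ a, ∏ b ∈ Finset.Ioi a, (y a - y b)) *
      (∏ a, ∏ b ∈ Finset.Ioi a, ((x a - 1) - (x b - 1))) * (∏ l, ∏ k, (y l - (x k - 1))) := by
    congr 1
    · simp [hVx, hVy]
    · rw [hP, Finset.prod_comm]
      exact Finset.prod_congr rfl fun l _ => Finset.prod_congr rfl fun k _ => by
        simp only [x, y]; ring
  rw [e1, e2, hlap, Finset.mul_sum, map_sum, Finset.sum_mul]
  refine Finset.sum_congr rfl fun lam _ => ?_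
  split_ifs with hlam
  swap
  · simp
  set Y : MvPolynomial (Fin i ⊕ Fin h) ℤ := (Matrix.of fun a b : Fin h =>
          y a ^ (extF (fun k => lam k) b + (h - 1 - (b : ℕ)))).det with hY
  have hla : Antitone (extF (fun k => lam k)) := extF_antitone lam hlam
  have hlz : ∀ k, h ≤ k → extF (fun k => lam k) k = 0 := extF_ge _
  have hYh : Y.IsHomogeneous (∑ l : Fin h, (lam l : ℕ) + ∑ c : Fin h, (h - 1 - (c : ℕ))) := by
    have := det_hom (τ := Fin i ⊕ Fin h) (fun k : Fin h => Sum.inr k)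
      (fun b => extF (fun k => lam k) b + (h - 1 - (b : ℕ)))
    rw [Finset.sum_add_distrib, Finset.sum_congr rfl fun k _ => extF_lt (fun k => lam k) k] at this
    exact this
  have hYS : Y = rename Sum.inr (Sy (extF (fun k => lam k))) * Vy := by
    have := congrArg (rename (Sum.inr : Fin h → Fin i ⊕ Fin h)) (hSy _ hla hlz)
    rw [map_mul, rename_det, map_prod, prod_pairs] at this
    simp only [map_sub, rename_X] at this
    exact this.symm
  have hex := expand_x (N := N) (K := K + 1) x
    (fun b => complConj i h (extF (fun k => lam k)) b + (i - 1 - (b : ℕ))) (by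
      intro b
      have := b.isLt
      simp only [complConj, b.isLt, if_true]
      omega)
  let z : (Fin i → ℕ) → ℤ := fun m => (∏ l : Fin h, (-1 : ℤ) ^ (i - (lam l : ℕ))) *
      (Matrix.of fun b c : Fin i => (Qp (K + 1) (complConj i h (extF (fun k => lam k)) b +
        (i - 1 - (b : ℕ)))).coeff (m c)).det
  let F : (Fin i → ℕ) → MvPolynomial (Fin i ⊕ Fin h) ℤ := fun m =>
    C (z m) * ((Matrix.of fun a c : Fin i => x a ^ (m c)).det * Y)
  have e3 : G * (Y * ((∏ l : Fin h, (-1) ^ (i - (lam l : ℕ))) *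
          (Matrix.of fun a b : Fin i => (x a - 1) ^ (complConj i h (extF (fun k => lam k)) b +
            (i - 1 - (b : ℕ)))).det)) =
      ∑ m : Fin i → Fin N with StrictAnti m, F (fun c => m c) := by
    have : ∀ A B D : MvPolynomial (Fin i ⊕ Fin h) ℤ, G * (A * (B * D)) = A * B * (G * D) := by
      intros; ring
    rw [this]
    refine (congrArg _ hex).trans ?_
    rw [Finset.mul_sum]
    refine Finset.sum_congr rfl fun m _ => ?_
    simp only [F, z]
    rw [eq_intCast C]
    push_cast
    ring
  rw [e3, map_sum]
  have hmu := sum_mu i d N (∑ l : Fin h, (lam l : ℕ)) (by omega) F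
  have e4 : ∀ m : Fin i → Fin N, homogeneousComponent
      (d + (∑ c : Fin i, (i - 1 - (c : ℕ)) + ∑ c : Fin h, (h - 1 - (c : ℕ)))) (F (fun c => m c)) =
      if ∑ l : Fin h, (lam l : ℕ) + ∑ c, (m c : ℕ) = d + ∑ c : Fin i, (i - 1 - (c : ℕ)) then
        F (fun c => m c) else 0 := by
    intro m
    have hAh := det_hom (τ := Fin i ⊕ Fin h) (fun k : Fin i => Sum.inl k) (fun c => (m c : ℕ))
    have hFh : (F (fun c => m c)).IsHomogeneous _ := (hAh.mul hYh).C_mul (z (fun c => m c))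
    rw [homogeneousComponent_of_mem hFh]
    refine if_congr ?_ rfl rfl
    omega
  simp_rw [e4]
  rw [hmu, Finset.sum_mul]
  refine Finset.sum_congr rfl fun mu _ => ?_
  split_ifs with hcond
  swap
  · simp
  have hma : Antitone (extF (fun k => mu k)) := extF_antitone mu hcond.1
  have hmz : ∀ k, d ≤ k → extF (fun k => mu k) k = 0 := extF_ge _
  have hXS := congrArg (rename (Sum.inl : Fin i → Fin i ⊕ Fin h))
    (hSx (conjP (extF (fun k => mu k))) (conjP_antitone hma hmz)
      (conjP_zero hma hmz (extF_le mu)))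
  rw [map_mul, rename_det, map_prod, prod_pairs] at hXS
  simp only [map_sub, rename_X] at hXS
  have hz := coef_id i h d (K + 1) (by omega) lam hlam mu hcond.1
  simp only [F]
  rw [← hz, hYS]
  change C (z _) * (Matrix.det (Matrix.of fun a b : Fin i => (X (Sum.inl a) :
    MvPolynomial (Fin i ⊕ Fin h) ℤ) ^ (conjP (extF (fun k => mu k)) b + (i - 1 - (b : ℕ)))) * _) = _
  rw [← hXS]
  change C (z _) * (_ * Vx * _) = C (z _) * _ * _ * _
  ring

theorem thom_polynomial_sigma_i1 (i h : ℕ) (hi : 1 ≤ i) (hh : 1 ≤ h)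
    (Sx : (ℕ → ℕ) → MvPolynomial (Fin i) ℤ)
    (Sy : (ℕ → ℕ) → MvPolynomial (Fin h) ℤ)
    -- bialternant characterization of the Schur polynomials in the x-variables:
    (hSx : ∀ nu : ℕ → ℕ, Antitone nu → (∀ k, i ≤ k → nu k = 0) →
      Sx nu * ∏ q ∈ Finset.univ.filter (fun q : Fin i × Fin i => q.1 < q.2),
          (X q.1 - X q.2)
        = (Matrix.of fun a b : Fin i =>
            (X a : MvPolynomial (Fin i) ℤ) ^ (nu (b : ℕ) + (i - 1 - (b : ℕ)))).det)
    -- bialternant characterization of the Schur polynomials in the y-variables: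
    (hSy : ∀ nu : ℕ → ℕ, Antitone nu → (∀ k, h ≤ k → nu k = 0) →
      Sy nu * ∏ q ∈ Finset.univ.filter (fun q : Fin h × Fin h => q.1 < q.2),
          (X q.1 - X q.2)
        = (Matrix.of fun a b : Fin h =>
            (X a : MvPolynomial (Fin h) ℤ) ^ (nu (b : ℕ) + (h - 1 - (b : ℕ)))).det) :
    MvPolynomial.homogeneousComponent (i * h - i + 1)
        ((∏ k : Fin i, ∏ l : Fin h,
            (1 + X (Sum.inr l) - X (Sum.inl k) : MvPolynomial (Fin i ⊕ Fin h) ℤ))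
          * ∑ r ∈ Finset.range ((i * h - i + 1) + 1), (-1) ^ r * hsymX i h r)
      = ∑ lam : Fin h → Fin (i + 1),
          if (∀ a b : Fin h, a ≤ b → lam b ≤ lam a) then
            ∑ mu : Fin (i * h - i + 1) → Fin (i + 1),
              if (∀ a b : Fin (i * h - i + 1), a ≤ b → mu b ≤ mu a) ∧
                  ((∑ l : Fin h, (lam l : ℕ)) + (∑ k : Fin (i * h - i + 1), (mu k : ℕ))
                    = i * h - i + 1) then
                C ((-1 : ℤ) ^ (∑ k : Fin (i * h - i + 1), (mu k : ℕ))
                    * ∑ x : Fin (i * h - i + 1) → Fin 2,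
                        if (∀ k : Fin (i * h - i + 1), (x k : ℕ) ≤ (mu k : ℕ)) ∧
                            (∀ a b : Fin (i * h - i + 1), a ≤ b →
                              (mu b : ℕ) - (x b : ℕ) ≤ (mu a : ℕ) - (x a : ℕ)) then
                          Edet i (complConj i h (extF (fun k => lam k)))
                            (conjP (extF (fun k =>
                              (⟨(mu k : ℕ) - (x k : ℕ),
                                lt_of_le_of_lt (Nat.sub_le _ _) (mu k).isLt⟩ : Fin (i + 1)))))
                        else 0)
                  * rename Sum.inl (Sx (conjP (extF (fun k => mu k))))
                  * rename Sum.inr (Sy (extF (fun k => lam k)))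
              else 0
          else 0 := by
  exact thom_general i h _ Sx Sy hSx hSy
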